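/- Let r > 0 and C₀ > 0. For each n let F_n be continuous on B̄_{2r}⁺ and H_n continuous on Γ̄_{2r} with sup_n ( sup_{B̄_{2r}⁺}|F_n| + sup_{Γ̄_{2r}}|H_n| ) ≤ C₀, and let v_n be a C² function on B̄_{2r}⁺ solving −Δv_n = F_n e^{2v_n} in B_{2r}⁺ and ∂v_n/∂ν = H_n e^{v_n} on Γ_{2r}. If the positive parts satisfy the uniform Sobolev bound sup_n ∫_{B_{2r}⁺} ( |∇v_n⁺|² + (v_n⁺)² ) dx ≤ C₀, then there exists a constant C, depending only on r and C₀, such that v_n ≤ C on B_{r/2}⁺ for all n. -/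

import Mathlib

open MeasureTheory Filter

noncomputable section

/-- Euclidean norm on `ℝ × ℝ`. -/
def nrm (p : ℝ × ℝ) : ℝ := Real.sqrt (p.1 ^ 2 + p.2 ^ 2)

/-- Euclidean Laplacian `Δw = ∂²w/∂s² + ∂²w/∂t²` of `w : ℝ × ℝ → ℝ`. -/
def lap (w : ℝ × ℝ → ℝ) (p : ℝ × ℝ) : ℝ :=
  deriv (fun s => deriv (fun s' => w (s', p.2)) s) p.1 +
    deriv (fun t => deriv (fun t' => w (p.1, t')) t) p.2

/-- The open upper half-ball `B_r⁺` of radius `r` centered at `0`. -/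
def ballPlus (r : ℝ) : Set (ℝ × ℝ) := {p | nrm p < r ∧ 0 < p.2}

/-- The closed upper half-ball `B̄_r⁺` of radius `r` centered at `0`. -/
def cballPlus (r : ℝ) : Set (ℝ × ℝ) := {p | nrm p ≤ r ∧ 0 ≤ p.2}

/-- Squared Euclidean gradient `|∇u|² = (∂u/∂s)² + (∂u/∂t)²`. -/
def gradSq (u : ℝ × ℝ → ℝ) (p : ℝ × ℝ) : ℝ :=
  (deriv (fun s => u (s, p.2)) p.1) ^ 2 + (deriv (fun t => u (p.1, t)) p.2) ^ 2

/-- A bounded measurable density with bounded support. -/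
structure GoodQ (Q : ℝ × ℝ → ℝ) (A L ρ : ℝ) : Prop where
  meas : Measurable Q
  nonneg : ∀ p, 0 ≤ Q p
  bdd : ∀ p, Q p ≤ L
  supp : ∀ p, Q p ≠ 0 → |p.1| ≤ ρ ∧ |p.2| ≤ ρ
  int : ∫ p, Q p ≤ A

lemma integrable_aux {α : Type*} [MeasurableSpace α] {μ : Measure α} {f : α → ℝ} {s : Set α} {L : ℝ}
    (hf : AEStronglyMeasurable f μ) (hs : MeasurableSet s) (hμ : μ s ≠ ⊤) (h0 : ∀ x, 0 ≤ f x)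
    (hL : ∀ x, f x ≤ L) (hsupp : ∀ x, f x ≠ 0 → x ∈ s) : Integrable f μ := by
  have h : Integrable (s.indicator fun _ => L) μ := by
    rw [integrable_indicator_iff hs]
    exact integrableOn_const hμ
  refine h.mono' hf (Eventually.of_forall fun x => ?_)
  rw [Real.norm_eq_abs, abs_of_nonneg (h0 x)]
  by_cases hx : f x = 0
  · rw [hx]
    exact Set.indicator_nonneg (fun y _ => (h0 y).trans (hL y)) x
  · rw [Set.indicator_of_mem (hsupp x hx)]
    exact hL x

namespace GoodQ
variable {Q : ℝ × ℝ → ℝ} {A L ρ : ℝ}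

lemma integrable (h : GoodQ Q A L ρ) : Integrable Q := by
  refine integrable_aux (s := Set.Icc (-ρ) ρ ×ˢ Set.Icc (-ρ) ρ) (L := L)
    h.meas.aestronglyMeasurable (measurableSet_Icc.prod measurableSet_Icc) ?_ h.nonneg h.bdd ?_
  · exact (isCompact_Icc.prod isCompact_Icc).measure_lt_top.ne
  · intro x hx
    have := h.supp x hx
    rw [abs_le, abs_le] at this
    exact this

lemma int1 (h : GoodQ Q A L ρ) (s : ℝ) : Integrable fun t => Q (s, t) := by
  refine integrable_aux (s := Set.Icc (-ρ) ρ) (L := L)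
    (h.meas.comp measurable_prodMk_left).aestronglyMeasurable measurableSet_Icc ?_
    (fun _ => h.nonneg _) (fun _ => h.bdd _) ?_
  · exact isCompact_Icc.measure_lt_top.ne
  · intro x hx
    have := h.supp _ hx
    rw [abs_le, abs_le] at this
    exact this.2

lemma int2 (h : GoodQ Q A L ρ) (t : ℝ) : Integrable fun s => Q (s, t) := by
  refine integrable_aux (s := Set.Icc (-ρ) ρ) (L := L)
    (h.meas.comp measurable_prodMk_right).aestronglyMeasurable measurableSet_Icc ?_
    (fun _ => h.nonneg _) (fun _ => h.bdd _) ?_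
  · exact isCompact_Icc.measure_lt_top.ne
  · intro x hx
    have := h.supp _ hx
    rw [abs_le, abs_le] at this
    exact this.1

lemma q1int (h : GoodQ Q A L ρ) : Integrable fun s => ∫ t, Q (s, t) :=
  h.integrable.integral_prod_left

lemma q2int (h : GoodQ Q A L ρ) : Integrable fun t => ∫ s, Q (s, t) :=
  h.integrable.integral_prod_right

lemma q1le (h : GoodQ Q A L ρ) : ∫ s, ∫ t, Q (s, t) ≤ A := by
  have := integral_prod Q h.integrable
  rw [← this]; exact h.int

lemma q2le (h : GoodQ Q A L ρ) : ∫ t, ∫ s, Q (s, t) ≤ A := by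
  have := integral_prod_symm Q h.integrable
  rw [← this]; exact h.int

/-- choice of a good radius -/
lemma good_radius (h : GoodQ Q A L ρ) (s0 t0 lam : ℝ) (hl : 0 < lam) :
    ∃ a, lam / 2 ≤ a ∧ a ≤ lam ∧ lam * (∫ t, Q (s0 + a, t)) ≤ 8 * A ∧
      lam * (∫ t, Q (s0 - a, t)) ≤ 8 * A ∧ lam * (∫ s, Q (s, t0 + a)) ≤ 8 * A ∧
      lam * (∫ s, Q (s, t0 - a)) ≤ 8 * A := by
  by_contra hcon
  push Not at hcon
  set S : ℝ → ℝ := fun a => (∫ t, Q (s0 + a, t)) + (∫ t, Q (s0 - a, t)) +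
    (∫ s, Q (s, t0 + a)) + (∫ s, Q (s, t0 - a)) with hS
  have i1 : Integrable fun a => (∫ t, Q (s0 + a, t)) := h.q1int.comp_add_left s0
  have i2 : Integrable fun a => (∫ t, Q (s0 - a, t)) := h.q1int.comp_sub_left s0
  have i3 : Integrable fun a => (∫ s, Q (s, t0 + a)) := h.q2int.comp_add_left t0
  have i4 : Integrable fun a => (∫ s, Q (s, t0 - a)) := h.q2int.comp_sub_left t0
  have p1 : ∀ s, 0 ≤ ∫ t, Q (s, t) := fun s => integral_nonneg fun t => h.nonneg _
  have p2 : ∀ t, 0 ≤ ∫ s, Q (s, t) := fun s => integral_nonneg fun t => h.nonneg _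
  have iS : Integrable S := ((i1.add i2).add i3).add i4
  have e : ∫ a, S a ≤ 4 * A := by
    have e1 : ∫ a, (∫ t, Q (s0 + a, t)) = ∫ a, (∫ t, Q (a, t)) :=
      integral_add_left_eq_self (fun a => ∫ t, Q (a, t)) s0
    have e2 : ∫ a, (∫ t, Q (s0 - a, t)) = ∫ a, (∫ t, Q (a, t)) :=
      integral_sub_left_eq_self (fun a => ∫ t, Q (a, t)) volume s0
    have e3 : ∫ a, (∫ s, Q (s, t0 + a)) = ∫ a, (∫ s, Q (s, a)) :=
      integral_add_left_eq_self (fun a => ∫ s, Q (s, a)) t0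
    have e4 : ∫ a, (∫ s, Q (s, t0 - a)) = ∫ a, (∫ s, Q (s, a)) :=
      integral_sub_left_eq_self (fun a => ∫ s, Q (s, a)) volume t0
    have : ∫ a, S a = (∫ a, (∫ t, Q (s0 + a, t))) + (∫ a, (∫ t, Q (s0 - a, t))) +
      (∫ a, (∫ s, Q (s, t0 + a))) + ∫ a, (∫ s, Q (s, t0 - a)) := by
      have j4 := integral_add ((i1.add i2).add i3) i4
      have j3 := integral_add (i1.add i2) i3
      have j2 := integral_add i1 i2
      simp only [Pi.add_apply] at j2 j3 j4
      rw [← j2, ← j3, ← j4]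
    rw [this, e1, e2, e3, e4]
    linarith [h.q1le, h.q2le]
  have key : ∀ a ∈ Set.Icc (lam / 2) lam, 8 * A / lam < S a := by
    intro a ha
    rw [div_lt_iff₀ hl, mul_comm]
    have := hcon a ha.1 ha.2
    have a1 := mul_nonneg hl.le (p1 (s0 + a))
    have a2 := mul_nonneg hl.le (p1 (s0 - a))
    have a3 := mul_nonneg hl.le (p2 (t0 + a))
    have a4 := mul_nonneg hl.le (p2 (t0 - a))
    simp only [hS]
    by_contra hc
    push Not at hc
    exact absurd (this (by linarith) (by linarith) (by linarith)) (by linarith)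
  have hlt : ∫ a in Set.Icc (lam / 2) lam, (8 * A / lam) < ∫ a in Set.Icc (lam / 2) lam, S a := by
    rw [integral_Icc_eq_integral_Ioc, integral_Icc_eq_integral_Ioc,
      ← intervalIntegral.integral_of_le (by linarith), ← intervalIntegral.integral_of_le (by linarith)]
    refine intervalIntegral.integral_lt_integral_of_ae_le_of_measure_setOfPred_lt_ne_zero (by linarith)
      intervalIntegrable_const iS.intervalIntegrable ?_ ?_
    · filter_upwards [ae_restrict_mem measurableSet_Ioc] with a ha
      exact (key a ⟨ha.1.le, ha.2⟩).le
    · have : (volume.restrict (Set.Ioc (lam / 2) lam)) (Set.Ioc (lam / 2) lam) ≤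
        (volume.restrict (Set.Ioc (lam / 2) lam)) {x | 8 * A / lam < S x} :=
        measure_mono fun a ha => key a ⟨ha.1.le, ha.2⟩
      intro h0
      rw [h0] at this
      simp at this
      linarith
  have h2 : ∫ a in Set.Icc (lam / 2) lam, S a ≤ ∫ a, S a := by
    refine setIntegral_le_integral iS (Eventually.of_forall fun a => ?_)
    have a1 := (p1 (s0 + a))
    have a2 := (p1 (s0 - a))
    have a3 := (p2 (t0 + a))
    have a4 := (p2 (t0 - a))
    simp only [hS, Pi.zero_apply]; linarith
  have h3 : ∫ a in Set.Icc (lam / 2) lam, (8 * A / lam) = 4 * A := by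
    simp [Measure.real]
    rw [ENNReal.toReal_ofReal (by linarith)]
    field_simp; ring
  linarith

lemma cone (h : GoodQ Q A L ρ) (s0 t0 a R m : ℝ) (ha : 0 < a) (haR : a ≤ R)
    (hm : ∀ τ ∈ Set.Ioc (0:ℝ) 1, m ≤ ∫ α in a..R, (1 / (2 * α) + α / 2 * Q (s0 + α, t0 + α * τ))) :
    m ≤ Real.log (R / a) / 2 + A / 2 := by
  have hR : 0 < R := by linarith
  set f : ℝ → ℝ → ℝ := fun τ α => α / 2 * Q (s0 + α, t0 + α * τ) with hf
  have mf : Measurable (Function.uncurry f) := by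
    have : Measurable fun p : ℝ × ℝ => (s0 + p.2, t0 + p.2 * p.1) := by fun_prop
    exact (measurable_snd.div_const 2).mul (h.meas.comp this)
  have bf : ∀ τ α, α ∈ Set.Ioc a R → ‖f τ α‖ ≤ R / 2 * L := by
    intro τ α hα
    have : 0 ≤ α / 2 := by linarith [hα.1]
    rw [Real.norm_eq_abs, abs_of_nonneg (mul_nonneg this (h.nonneg _))]
    exact mul_le_mul (by linarith [hα.2]) (h.bdd _) (h.nonneg _) (by linarith)
  have intf : Integrable (Function.uncurry f)
      ((volume.restrict (Set.uIoc 0 1)).prod (volume.restrict (Set.uIoc a R))) := by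
    rw [Measure.prod_restrict, Set.uIoc_of_le haR, Set.uIoc_of_le zero_le_one]
    refine Measure.integrableOn_of_bounded (M := R / 2 * L) ?_ mf.aestronglyMeasurable ?_
    · rw [Measure.prod_prod]; simp
    · filter_upwards [ae_restrict_mem (measurableSet_Ioc.prod measurableSet_Ioc)] with p hp
      exact bf _ _ hp.2
  have intα : ∀ τ, IntervalIntegrable (f τ) volume a R := by
    intro τ
    rw [intervalIntegrable_iff, Set.uIoc_of_le haR]
    refine Measure.integrableOn_of_bounded (M := R / 2 * L) (by simp)
      (mf.comp measurable_prodMk_left).aestronglyMeasurable ?_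
    filter_upwards [ae_restrict_mem measurableSet_Ioc] with p hp
    exact bf _ _ hp
  have intlog : IntervalIntegrable (fun α : ℝ => 1 / (2 * α)) volume a R := by
    refine ContinuousOn.intervalIntegrable ?_
    rw [Set.uIcc_of_le haR]
    refine continuousOn_const.div (by fun_prop) fun x hx => ?_
    have := ha.trans_le hx.1; positivity
  have elog : ∫ α in a..R, 1 / (2 * α) = Real.log (R / a) / 2 := by
    have : ∀ α : ℝ, 1 / (2 * α) = 1 / 2 * (1 / α) := fun α => by rw [one_div_mul_one_div]
    simp_rw [this]
    rw [intervalIntegral.integral_const_mul, integral_one_div_of_pos ha hR]; ring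
  have step1 : ∀ τ ∈ Set.Ioc (0:ℝ) 1, m - Real.log (R / a) / 2 ≤ ∫ α in a..R, f τ α := by
    intro τ hτ
    have := hm τ hτ
    rw [intervalIntegral.integral_add intlog (intα τ), elog] at this
    linarith
  have i0 : IntervalIntegrable (fun τ => ∫ α in a..R, f τ α) volume 0 1 := by
    rw [intervalIntegrable_iff]
    have := intf.integral_prod_left
    refine this.congr (Eventually.of_forall fun τ => ?_)
    simp only [Function.uncurry]
    rw [intervalIntegral.integral_of_le haR, Set.uIoc_of_le haR]
  have step2 : m - Real.log (R / a) / 2 ≤ ∫ τ in (0:ℝ)..1, ∫ α in a..R, f τ α := by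
    have := intervalIntegral.integral_mono_on_of_le_Ioo zero_le_one
      (intervalIntegrable_const (c := m - Real.log (R / a) / 2)) i0
      (fun τ hτ => step1 τ ⟨hτ.1, hτ.2.le⟩)
    simpa using this
  have swap : ∫ τ in (0:ℝ)..1, ∫ α in a..R, f τ α = ∫ α in a..R, ∫ τ in (0:ℝ)..1, f τ α := by
    have := intervalIntegral_integral_swap intf
    rw [Set.uIoc_of_le haR] at this
    simp_rw [intervalIntegral.integral_of_le haR]
    exact this
  have i1 : IntervalIntegrable (fun α => ∫ τ in (0:ℝ)..1, f τ α) volume a R := by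
    rw [intervalIntegrable_iff]
    have := intf.integral_prod_right
    refine this.congr (Eventually.of_forall fun τ => ?_)
    simp only [Function.uncurry]
    rw [intervalIntegral.integral_of_le zero_le_one, Set.uIoc_of_le zero_le_one]
  have inner : ∀ α ∈ Set.Icc a R, ∫ τ in (0:ℝ)..1, f τ α ≤ 1 / 2 * ∫ t, Q (s0 + α, t) := by
    intro α hα
    have h1 := intervalIntegral.smul_integral_comp_mul_add (a := 0) (b := 1)
      (fun t => Q (s0 + α, t)) α t0
    have h2 : ∫ τ in (0:ℝ)..1, f τ α = 1 / 2 * ∫ t in (α * 0 + t0)..(α * 1 + t0), Q (s0 + α, t) := by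
      rw [← h1, smul_eq_mul, ← mul_assoc, ← intervalIntegral.integral_const_mul]
      refine intervalIntegral.integral_congr fun τ _ => ?_
      simp only [hf]
      rw [add_comm (α * τ)]; ring
    rw [h2, intervalIntegral.integral_of_le (by linarith [hα.1])]
    have := setIntegral_le_integral (s := Set.Ioc (α * 0 + t0) (α * 1 + t0)) (h.int1 (s0 + α))
      (Eventually.of_forall fun t => h.nonneg _)
    linarith
  have i2 : Integrable fun α => 1 / 2 * ∫ t, Q (s0 + α, t) :=
    (h.q1int.comp_add_left s0).const_mul _
  have step3 : ∫ α in a..R, ∫ τ in (0:ℝ)..1, f τ α ≤ ∫ α in a..R, 1 / 2 * ∫ t, Q (s0 + α, t) :=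
    intervalIntegral.integral_mono_on haR i1 i2.intervalIntegrable inner
  have step4 : ∫ α in a..R, 1 / 2 * ∫ t, Q (s0 + α, t) ≤ ∫ α, 1 / 2 * ∫ t, Q (s0 + α, t) := by
    rw [intervalIntegral.integral_of_le haR]
    refine setIntegral_le_integral i2 (Eventually.of_forall fun α => ?_)
    exact mul_nonneg (by norm_num) (integral_nonneg fun t => h.nonneg _)
  have step5 : ∫ α, 1 / 2 * ∫ t, Q (s0 + α, t) ≤ A / 2 := by
    rw [integral_const_mul, integral_add_left_eq_self (fun a => ∫ t, Q (a, t)) s0]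
    linarith [h.q1le]
  linarith

end GoodQ

/-- One dimensional second derivative test. -/
lemma second_deriv_test {f : ℝ → ℝ} {x b c k : ℝ} (hf : ContDiffAt ℝ 2 f x)
    (hmax : IsLocalMax (fun y => f y + (c * (y - b) ^ 2 + k * y)) x) :
    deriv (fun y => deriv f y) x ≤ -(2 * c) := by
  set g : ℝ → ℝ := fun y => f y + (c * (y - b) ^ 2 + k * y) with hg
  have hd : ∀ᶠ y in nhds x, DifferentiableAt ℝ f y :=
    (hf.eventually (by simp)).mono fun y hy => hy.differentiableAt (by norm_num)
  have hq : ∀ y, HasDerivAt (fun y => c * (y - b) ^ 2 + k * y) (2 * c * (y - b) + k) y := by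
    intro y
    have := ((((hasDerivAt_id y).sub_const b).pow 2).const_mul c).add ((hasDerivAt_id y).const_mul k)
    exact HasDerivAt.congr_deriv (f := fun y => c * (y - b) ^ 2 + k * y) this (by simp; ring)
  have hdg : deriv g =ᶠ[nhds x] fun y => deriv f y + (2 * c * (y - b) + k) := by
    filter_upwards [hd] with y hy
    exact (hy.hasDerivAt.add (hq y)).deriv
  have hdf : DifferentiableAt ℝ (deriv f) x := by
    have h1 : ContDiffAt ℝ 1 (deriv f) x := hf.derivWithin (by norm_num)
    exact h1.differentiableAt (by norm_num)
  have hddg : deriv (deriv g) x = deriv (deriv f) x + 2 * c := by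
    rw [hdg.deriv_eq]
    have h2 : HasDerivAt (fun y => 2 * c * (y - b) + k) (2 * c) x := by
      have := (((hasDerivAt_id x).sub_const b).const_mul (2 * c)).add_const k
      simpa using this
    exact (hdf.hasDerivAt.add h2).deriv
  by_contra hcon
  push Not at hcon
  have hpos : 0 < deriv (deriv g) x := by
    rw [hddg]
    have : deriv (fun y => deriv f y) x = deriv (deriv f) x := rfl
    linarith
  have hcont : ContinuousAt g x := hf.continuousAt.add (by fun_prop)
  have hmin : IsLocalMin g x := isLocalMin_of_deriv_deriv_pos hpos hmax.deriv_eq_zero hcont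
  have hconst : g =ᶠ[nhds x] fun _ => g x := by
    filter_upwards [hmin, hmax] with y h1 h2
    exact le_antisymm h2 h1
  have : deriv g =ᶠ[nhds x] fun _ => 0 := by
    filter_upwards [hconst.eventuallyEq_nhds] with y hy
    rw [hy.deriv_eq]; simp
  rw [this.deriv_eq] at hpos
  simp at hpos

/-- Barrier maximum principle on a clipped square. -/
lemma max_principle (v : ℝ × ℝ → ℝ) (s0 t0 a E C : ℝ) (ha : 0 < a) (ht0 : 0 ≤ t0)
    (hE : 0 < E) (hC : 0 < C) (haE : a * (8 * E) ≤ 1)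
    (hcont : ContinuousOn v {p : ℝ × ℝ | |p.1 - s0| ≤ a ∧ |p.2 - t0| ≤ a ∧ 0 ≤ p.2})
    (hC2 : ∀ p : ℝ × ℝ, |p.1 - s0| < a → |p.2 - t0| < a → 0 < p.2 → ContDiffAt ℝ 2 v p)
    (hlap : ∀ p : ℝ × ℝ, |p.1 - s0| < a → |p.2 - t0| < a → 0 < p.2 → -(4 * C * E ^ 2) ≤ lap v p)
    (hbot : ∀ s, |s - s0| < a → t0 ≤ a → ∃ d, HasDerivWithinAt (fun t => v (s, t)) d (Set.Ici 0) 0 ∧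
      -(2 * C * E) ≤ d) :
    ∃ y : ℝ × ℝ, |y.1 - s0| ≤ a ∧ |y.2 - t0| ≤ a ∧ 0 ≤ y.2 ∧
      (|y.1 - s0| = a ∨ (|y.2 - t0| = a ∧ 0 < y.2)) ∧ v (s0, t0) ≤ v y + C / 2 := by
  set P := {p : ℝ × ℝ | |p.1 - s0| ≤ a ∧ |p.2 - t0| ≤ a ∧ 0 ≤ p.2} with hP
  have hPc : IsCompact P := by
    have h1 : IsClosed P := by
      have f1 : Continuous fun p : ℝ × ℝ => |p.1 - s0| := by fun_prop
      have f2 : Continuous fun p : ℝ × ℝ => |p.2 - t0| := by fun_prop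
      refine IsClosed.inter ?_ (IsClosed.inter ?_ ?_)
      · exact isClosed_le f1 continuous_const
      · exact isClosed_le f2 continuous_const
      · exact isClosed_le continuous_const continuous_snd
    refine (isCompact_Icc.prod isCompact_Icc).of_isClosed_subset
      (s := Set.Icc (s0 - a) (s0 + a) ×ˢ Set.Icc (t0 - a) (t0 + a)) h1 ?_
    rintro p ⟨h1, h2, -⟩
    rw [abs_le] at h1 h2
    exact ⟨⟨by linarith, by linarith⟩, ⟨by linarith, by linarith⟩⟩
  set c := 2 * C * E ^ 2 with hc
  set K := 3 * C * E with hK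
  have hx0 : (s0, t0) ∈ P := by simp [hP, ha.le, ht0]
  set w : ℝ × ℝ → ℝ := fun p => v p + (c * (p.1 - s0) ^ 2 + c * (p.2 - t0) ^ 2 + K * (p.2 - t0)) with hw
  have hwc : ContinuousOn w P := hcont.add (by fun_prop)
  obtain ⟨y, hyP, hymax⟩ := hPc.exists_isMaxOn ⟨_, hx0⟩ hwc
  have hmax : ∀ p ∈ P, w p ≤ w y := hymax
  refine ⟨y, hyP.1, hyP.2.1, hyP.2.2, ?_, ?_⟩
  · by_contra hcon
    push Not at hcon
    obtain ⟨hc1, hc2⟩ := hcon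
    have h1 : |y.1 - s0| < a := lt_of_le_of_ne hyP.1 hc1
    rcases hyP.2.2.eq_or_lt with h0 | h0
    · -- bottom
      have hta : t0 ≤ a := by
        have := hyP.2.1
        rw [← h0, zero_sub, abs_neg, abs_of_nonneg ht0] at this
        exact this
      obtain ⟨d, hd, hdge⟩ := hbot y.1 h1 hta
      have hq : HasDerivWithinAt (fun t => c * (y.1 - s0) ^ 2 + c * (t - t0) ^ 2 + K * (t - t0))
          (-(2 * c * t0) + K) (Set.Ici 0) 0 := by
        have h := (((((hasDerivAt_id (0:ℝ)).sub_const t0).pow 2).const_mul c).const_add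
          (c * (y.1 - s0) ^ 2)).add (((hasDerivAt_id (0:ℝ)).sub_const t0).const_mul K)
        refine HasDerivAt.hasDerivWithinAt ?_
        exact HasDerivAt.congr_deriv
          (f := fun t => c * (y.1 - s0) ^ 2 + c * (t - t0) ^ 2 + K * (t - t0)) h (by simp; ring)
      have hwd : HasDerivWithinAt (fun t => w (y.1, t)) (d + (-(2 * c * t0) + K)) (Set.Ici 0) 0 :=
        hd.add hq
      have hpos : 0 < d + (-(2 * c * t0) + K) := by
        have h3 : 2 * c * t0 ≤ C * E / 2 := by
          have : t0 * (8 * E) ≤ 1 := le_trans (mul_le_mul_of_nonneg_right hta (by positivity)) haE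
          have h4 : C * E / 2 * (t0 * (8 * E)) ≤ C * E / 2 * 1 :=
            mul_le_mul_of_nonneg_left this (by positivity)
          calc 2 * c * t0 = C * E / 2 * (t0 * (8 * E)) := by rw [hc]; ring
            _ ≤ _ := by linarith
        have : 0 < C * E := by positivity
        rw [hK]; linarith
      have hev : ∀ᶠ t in nhdsWithin 0 (Set.Ioi (0:ℝ)), w (y.1, 0) < w (y.1, t) := by
        have hs := (hasDerivWithinAt_iff_tendsto_slope' (by simp)).1 (hwd.mono Set.Ioi_subset_Ici_self)
        filter_upwards [hs.eventually (lt_mem_nhds hpos), self_mem_nhdsWithin] with t ht ht'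
        have ht' : 0 < t := ht'
        rw [slope_def_field] at ht
        have := (div_pos_iff_of_pos_right (by linarith : (0:ℝ) < t - 0)).1 ht
        linarith
      have hev2 : ∀ᶠ t in nhdsWithin 0 (Set.Ioi (0:ℝ)), t < a :=
        nhdsWithin_le_nhds (gt_mem_nhds ha)
      obtain ⟨t, ⟨h5, h6⟩, h7⟩ := ((hev.and hev2).and self_mem_nhdsWithin).exists
      have h7 : 0 < t := h7
      have hy : y = (y.1, 0) := by ext <;> simp [← h0]
      have : w (y.1, t) ≤ w (y.1, 0) := by
        rw [← hy]
        refine hmax _ ⟨h1.le, ?_, h7.le⟩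
        rw [abs_le]; constructor <;> simp only <;> linarith
      linarith
    · -- interior
      have h2 : |y.2 - t0| < a := lt_of_le_of_ne hyP.2.1 fun h => absurd (hc2 h) (by linarith)
      have hC2y := hC2 y h1 h2 h0
      have hl := hlap y h1 h2 h0
      have hnear : ∀ᶠ p in nhds y, w p ≤ w y := by
        have e1 : ∀ᶠ p : ℝ × ℝ in nhds y, |p.1 - s0| < a :=
          (by fun_prop : Continuous fun p : ℝ × ℝ => |p.1 - s0|).continuousAt.eventually (gt_mem_nhds h1)
        have e2 : ∀ᶠ p : ℝ × ℝ in nhds y, |p.2 - t0| < a :=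
          (by fun_prop : Continuous fun p : ℝ × ℝ => |p.2 - t0|).continuousAt.eventually (gt_mem_nhds h2)
        have e3 : ∀ᶠ p : ℝ × ℝ in nhds y, 0 < p.2 :=
          continuous_snd.continuousAt.eventually (lt_mem_nhds h0)
        filter_upwards [e1, e2, e3] with p q1 q2 q3
        exact hmax p ⟨q1.le, q2.le, q3.le⟩
      have t1 : Tendsto (fun s : ℝ => (s, y.2)) (nhds y.1) (nhds y) :=
        (by fun_prop : Continuous fun s : ℝ => (s, y.2)).tendsto' _ _ rfl
      have t2 : Tendsto (fun t : ℝ => (y.1, t)) (nhds y.2) (nhds y) :=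
        (by fun_prop : Continuous fun t : ℝ => (y.1, t)).tendsto' _ _ rfl
      have l1 := second_deriv_test (f := fun s => v (s, y.2)) (x := y.1) (b := s0) (c := c) (k := 0)
        (ContDiffAt.comp y.1 (g := v) hC2y (by fun_prop)) (by
          filter_upwards [t1.eventually hnear] with s hs
          simp only [hw] at hs ⊢
          linarith)
      have l2 := second_deriv_test (f := fun t => v (y.1, t)) (x := y.2) (b := t0) (c := c) (k := K)
        (ContDiffAt.comp y.2 (g := v) hC2y (by fun_prop)) (by
          filter_upwards [t2.eventually hnear] with s hs
          simp only [hw] at hs ⊢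
          linarith)
      have : lap v y ≤ -(4 * c) := by
        unfold lap; linarith
      have : 0 < C * E ^ 2 := by positivity
      rw [hc] at *
      linarith
  · have h1 := hmax _ hx0
    simp only [hw, sub_self] at h1
    have b1 : (y.1 - s0) ^ 2 ≤ a ^ 2 := sq_le_sq' (by linarith [(abs_le.1 hyP.1).1]) (abs_le.1 hyP.1).2
    have b2 : (y.2 - t0) ^ 2 ≤ a ^ 2 := sq_le_sq' (by linarith [(abs_le.1 hyP.2.1).1]) (abs_le.1 hyP.2.1).2
    have b3 := (abs_le.1 hyP.2.1).2
    have hcp : 0 < c := by positivity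
    have hKp : 0 < K := by positivity
    have c1 := mul_le_mul_of_nonneg_left b1 hcp.le
    have c2 := mul_le_mul_of_nonneg_left b2 hcp.le
    have c3 := mul_le_mul_of_nonneg_left b3 hKp.le
    have d1 : c * a ^ 2 ≤ C / 32 := by
      have : (a * (8 * E)) ^ 2 ≤ 1 := pow_le_one₀ (by positivity) haE
      have := mul_le_mul_of_nonneg_left this (by positivity : 0 ≤ C / 32)
      calc c * a ^ 2 = C / 32 * (a * (8 * E)) ^ 2 := by rw [hc]; ring
        _ ≤ _ := by linarith
    have d2 : K * a ≤ 3 / 8 * C := by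
      have := mul_le_mul_of_nonneg_left haE (by positivity : 0 ≤ 3 * C / 8)
      calc K * a = 3 * C / 8 * (a * (8 * E)) := by rw [hK]; ring
        _ ≤ _ := by linarith
    linarith

lemma nrm_eq (p : ℝ × ℝ) : nrm p = ‖Complex.equivRealProdCLM.symm p‖ := by
  unfold nrm
  rw [Complex.norm_def, Complex.normSq_apply]
  simp [Complex.equivRealProdCLM_symm_apply, sq]

lemma nrm_cont : Continuous nrm := by
  unfold nrm; fun_prop

lemma nrm_add_le (s t h k : ℝ) : nrm (s + h, t + k) ≤ nrm (s, t) + |h| + |k| := by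
  have e : ((s + h, t + k) : ℝ × ℝ) = (s, t) + ((h, 0) + (0, k)) := by simp
  rw [e, nrm_eq, nrm_eq, map_add, map_add]
  have h1 := norm_add_le (Complex.equivRealProdCLM.symm (s, t))
    (Complex.equivRealProdCLM.symm (h, 0) + Complex.equivRealProdCLM.symm (0, k))
  have h2 := norm_add_le (Complex.equivRealProdCLM.symm (h, 0)) (Complex.equivRealProdCLM.symm (0, k))
  have h3 : ‖Complex.equivRealProdCLM.symm (h, 0)‖ = |h| := by
    rw [← nrm_eq]; simp [nrm, Real.sqrt_sq_eq_abs]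
  have h4 : ‖Complex.equivRealProdCLM.symm (0, k)‖ = |k| := by
    rw [← nrm_eq]; simp [nrm, Real.sqrt_sq_eq_abs]
  linarith

lemma abs_fst_le_nrm (p : ℝ × ℝ) : |p.1| ≤ nrm p := by
  unfold nrm
  exact Real.abs_le_sqrt (by nlinarith [sq_nonneg p.2])

lemma abs_snd_le_nrm (p : ℝ × ℝ) : |p.2| ≤ nrm p := by
  unfold nrm
  exact Real.abs_le_sqrt (by nlinarith [sq_nonneg p.1])

lemma ballPlus_open (r : ℝ) : IsOpen (ballPlus r) :=
  (isOpen_lt nrm_cont continuous_const).inter (isOpen_lt continuous_const continuous_snd)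

lemma ballPlus_sub (r : ℝ) : ballPlus r ⊆ cballPlus r := fun _ hp => ⟨hp.1.le, hp.2.le⟩

lemma cballPlus_compact (r : ℝ) : IsCompact (cballPlus r) := by
  have h1 : IsClosed (cballPlus r) :=
    (isClosed_le nrm_cont continuous_const).inter (isClosed_le continuous_const continuous_snd)
  refine (isCompact_Icc.prod isCompact_Icc).of_isClosed_subset
    (s := Set.Icc (-r) r ×ˢ Set.Icc (-r) r) h1 ?_
  rintro p ⟨h1, -⟩
  exact ⟨abs_le.1 ((abs_fst_le_nrm p).trans h1), abs_le.1 ((abs_snd_le_nrm p).trans h1)⟩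

lemma cballPlus_uniqueDiff {r : ℝ} (hr : 0 < r) : UniqueDiffOn ℝ (cballPlus r) := by
  refine uniqueDiffOn_convex ?_ ?_
  · have h1 : Convex ℝ {p : ℝ × ℝ | nrm p ≤ r} := by
      have := (convex_closedBall (0 : ℂ) r).linear_preimage
        (Complex.equivRealProdCLM.symm.toLinearEquiv.toLinearMap)
      have e : {p : ℝ × ℝ | nrm p ≤ r} =
          (Complex.equivRealProdCLM.symm.toLinearEquiv.toLinearMap) ⁻¹' Metric.closedBall (0 : ℂ) r := by
        ext p
        simp [nrm_eq]
      rw [e]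
      exact this
    have h2 : Convex ℝ {p : ℝ × ℝ | 0 ≤ p.2} :=
      (convex_Ici (0:ℝ)).linear_preimage (LinearMap.snd ℝ ℝ ℝ)
    exact h1.inter h2
  · refine ⟨(0, r / 2), (interior_mono (ballPlus_sub r)) ?_⟩
    rw [(ballPlus_open r).interior_eq]
    refine ⟨?_, by simp; linarith⟩
    have : nrm (0, r / 2) = r / 2 := by
      unfold nrm; simp [Real.sqrt_sq_eq_abs]; linarith
    rw [this]; linarith

/-- C¹ regularised positive part -/
def Phi (x : ℝ) : ℝ := max x 0 ^ 2 / (1 + max x 0)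
/-- its derivative -/
def dPhi (x : ℝ) : ℝ := 1 - 1 / (1 + max x 0) ^ 2

lemma Phi_hasDerivAt (x : ℝ) : HasDerivAt Phi (dPhi x) x := by
  have hR : ∀ x : ℝ, 0 ≤ x → HasDerivWithinAt Phi (dPhi x) (Set.Ici 0) x := by
    intro x hx
    have h : HasDerivAt (fun y : ℝ => y ^ 2 / (1 + y)) (dPhi x) x := by
      have h1 : 1 + x ≠ 0 := by linarith
      have := ((hasDerivAt_id x).pow 2).div ((hasDerivAt_id x).const_add 1) h1
      refine HasDerivAt.congr_deriv (f := fun y : ℝ => y ^ 2 / (1 + y)) this ?_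
      unfold dPhi
      rw [max_eq_left hx]
      simp
      field_simp
      ring
    refine h.hasDerivWithinAt.congr (fun y hy => ?_) ?_
    · unfold Phi; rw [max_eq_left hy]
    · unfold Phi; rw [max_eq_left hx]
  have hL : ∀ x : ℝ, x ≤ 0 → HasDerivWithinAt Phi (dPhi x) (Set.Iic 0) x := by
    intro x hx
    have h : HasDerivAt (fun y : ℝ => (0:ℝ)) (dPhi x) x := by
      unfold dPhi
      rw [max_eq_right hx]
      simpa using hasDerivAt_const x (0:ℝ)
    refine h.hasDerivWithinAt.congr (fun y hy => ?_) ?_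
    · unfold Phi; rw [max_eq_right hy]; simp
    · unfold Phi; rw [max_eq_right hx]; simp
  rcases lt_trichotomy x 0 with h | h | h
  · exact (hL x h.le).hasDerivAt (Iic_mem_nhds h)
  · subst h
    have := (hL 0 le_rfl).union (hR 0 le_rfl)
    rw [Set.Iic_union_Ici] at this
    exact hasDerivWithinAt_univ.1 this
  · exact (hR x h.le).hasDerivAt (Ici_mem_nhds h)

lemma dPhi_cont : Continuous dPhi := by
  unfold dPhi
  refine continuous_const.sub (continuous_const.div (by fun_prop) fun x => ?_)
  have : 0 ≤ max x 0 := le_max_right _ _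
  positivity

lemma Phi_cont : Continuous Phi :=
  continuous_iff_continuousAt.2 fun x => (Phi_hasDerivAt x).continuousAt

lemma Phi_nonneg (x : ℝ) : 0 ≤ Phi x := by
  have : 0 ≤ max x 0 := le_max_right _ _
  unfold Phi; positivity

lemma Phi_le (x : ℝ) : Phi x ≤ max x 0 := by
  have : 0 ≤ max x 0 := le_max_right _ _
  unfold Phi
  rw [div_le_iff₀ (by positivity)]
  nlinarith

lemma le_Phi (x : ℝ) : x ≤ Phi x + 1 := by
  have h0 : 0 ≤ max x 0 := le_max_right _ _
  have h1 : x ≤ max x 0 := le_max_left _ _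
  have : max x 0 - 1 ≤ Phi x := by
    unfold Phi
    rw [le_div_iff₀ (by positivity)]
    nlinarith
  linarith

lemma dPhi_of_nonpos {x : ℝ} (hx : x ≤ 0) : dPhi x = 0 := by
  unfold dPhi; rw [max_eq_right hx]; simp

lemma dPhi_sq_le (x : ℝ) : dPhi x ^ 2 ≤ 1 := by
  have h0 : 0 ≤ max x 0 := le_max_right _ _
  have h1 : 1 / (1 + max x 0) ^ 2 ≤ 1 := by
    rw [div_le_one (by positivity)]; nlinarith
  have h2 : 0 ≤ 1 / (1 + max x 0) ^ 2 := by positivity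
  unfold dPhi
  nlinarith

lemma young {y q al : ℝ} (hal : 0 < al) (h : y ^ 2 ≤ q) : y ≤ 1 / (2 * al) + al / 2 * q := by
  have h1 : al / 2 * y ^ 2 ≤ al / 2 * q := mul_le_mul_of_nonneg_left h (by positivity)
  have h2 : 1 / (2 * al) + al / 2 * y ^ 2 - y = (al * y - 1) ^ 2 / (2 * al) := by
    field_simp; ring
  have h3 : 0 ≤ (al * y - 1) ^ 2 / (2 * al) := by positivity
  linarith

/-- One dimensional fundamental theorem bound. -/
lemma ftc_le {f f' g : ℝ → ℝ} {a b : ℝ} (hab : a ≤ b)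
    (hd : ∀ x ∈ Set.Icc a b, HasDerivWithinAt f (f' x) (Set.Icc a b) x)
    (hc : ContinuousOn f' (Set.Icc a b)) (hg : IntervalIntegrable g volume a b)
    (h : ∀ x ∈ Set.Ioo a b, f' x ≤ g x) : f b - f a ≤ ∫ x in a..b, g x := by
  have hi : IntervalIntegrable f' volume a b := by
    apply ContinuousOn.intervalIntegrable
    rwa [Set.uIcc_of_le hab]
  have := intervalIntegral.integral_eq_sub_of_hasDerivAt_of_le hab
    (fun x hx => (hd x hx).continuousWithinAt)
    (fun x hx => (hd x ⟨hx.1.le, hx.2.le⟩).hasDerivAt (Icc_mem_nhds hx.1 hx.2)) hi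
  rw [← this]
  exact intervalIntegral.integral_mono_on_of_le_Ioo hab hi hg h

lemma osc_le {f f' q : ℝ → ℝ} {a b lam : ℝ} (hlam : 0 < lam) (hba : b - a ≤ 2 * lam)
    (hd : ∀ x ∈ Set.Icc a b, HasDerivWithinAt f (f' x) (Set.Icc a b) x)
    (hc : ContinuousOn f' (Set.Icc a b)) (hq : Integrable q) (hq0 : ∀ x, 0 ≤ q x)
    (h : ∀ x ∈ Set.Ioo a b, f' x ^ 2 ≤ q x) (x y : ℝ) (hx : x ∈ Set.Icc a b) (hy : y ∈ Set.Icc a b) :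
    f x - f y ≤ 1 + lam / 2 * ∫ t, q t := by
  have main : ∀ (F F' : ℝ → ℝ) (x y : ℝ), x ∈ Set.Icc a b → y ∈ Set.Icc a b → x ≤ y →
      (∀ x ∈ Set.Icc a b, HasDerivWithinAt F (F' x) (Set.Icc a b) x) →
      ContinuousOn F' (Set.Icc a b) → (∀ x ∈ Set.Ioo a b, F' x ^ 2 ≤ q x) →
      F y - F x ≤ 1 + lam / 2 * ∫ t, q t := by
    intro F F' x y hx hy hxy hd hc h
    have sub : Set.Icc x y ⊆ Set.Icc a b := Set.Icc_subset_Icc hx.1 hy.2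
    have i1 : IntervalIntegrable (fun t => 1 / (2 * lam) + lam / 2 * q t) volume x y :=
      intervalIntegrable_const.add (hq.const_mul _).intervalIntegrable
    have h1 := ftc_le (g := fun t => 1 / (2 * lam) + lam / 2 * q t) hxy
      (fun z hz => (hd z (sub hz)).mono sub) (hc.mono sub) i1
      (fun z hz => young hlam (h z ⟨hx.1.trans_lt hz.1, hz.2.trans_le hy.2⟩))
    rw [intervalIntegral.integral_add intervalIntegrable_const (hq.const_mul _).intervalIntegrable,
      intervalIntegral.integral_const_mul, intervalIntegral.integral_const, smul_eq_mul,
      intervalIntegral.integral_of_le hxy] at h1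
    have h2 := setIntegral_le_integral (s := Set.Ioc x y) hq (Eventually.of_forall hq0)
    have h3 : (y - x) * (1 / (2 * lam)) ≤ 1 := by
      rw [mul_one_div, div_le_one (by positivity)]
      linarith [hx.1, hy.2]
    have h4 := mul_le_mul_of_nonneg_left h2 (by positivity : 0 ≤ lam / 2)
    linarith
  rcases le_total x y with hxy | hxy
  · have := main (fun t => -f t) (fun t => -f' t) x y hx hy hxy (fun z hz => (hd z hz).neg) hc.neg
      (fun z hz => by simpa using h z hz)
    linarith
  · exact main f f' y x hy hx hxy hd hc h

/-- Regularised energy density attached to `v`. -/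
lemma build (r k C₀ : ℝ) (hr : 0 < r) (v : ℝ × ℝ → ℝ)
    (hv : ContDiffOn ℝ 2 v (cballPlus (2 * r)))
    (hen : (∫ p in ballPlus (2 * r), (gradSq (fun q => max (v q) 0) p + max (v p) 0 ^ 2)) ≤ C₀) :
    ∃ (Us Ut Q : ℝ × ℝ → ℝ) (L : ℝ), GoodQ Q (3 * (1 + k ^ 2) * C₀) L (2 * r) ∧
      ContinuousOn Us (cballPlus (2 * r)) ∧ ContinuousOn Ut (cballPlus (2 * r)) ∧
      (∀ (c : ℝ → ℝ × ℝ) (e : ℝ × ℝ) (I : Set ℝ) (x : ℝ), x ∈ I → HasDerivAt c e x →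
        Set.MapsTo c I (cballPlus (2 * r)) →
        HasDerivWithinAt (fun t => Phi (v (c t))) (e.1 * Us (c x) + e.2 * Ut (c x)) I x) ∧
      (∀ p ∈ ballPlus (2 * r), (|Us p| + |Ut p| + k * Phi (v p)) ^ 2 ≤ Q p) := by
  set D := cballPlus (2 * r) with hD
  have hU : UniqueDiffOn ℝ D := cballPlus_uniqueDiff (by linarith)
  have hdiff : DifferentiableOn ℝ v D := hv.differentiableOn (by norm_num)
  have hfc : ContinuousOn (fderivWithin ℝ v D) D := hv.continuousOn_fderivWithin hU (by norm_num)
  set gs : ℝ × ℝ → ℝ := fun p => fderivWithin ℝ v D p (1, 0) with hgs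
  set gt : ℝ × ℝ → ℝ := fun p => fderivWithin ℝ v D p (0, 1) with hgt
  have cgs : ContinuousOn gs D := hfc.clm_apply continuousOn_const
  have cgt : ContinuousOn gt D := hfc.clm_apply continuousOn_const
  have cv : ContinuousOn v D := hv.continuousOn
  have hDc : IsCompact D := cballPlus_compact _
  set g : ℝ × ℝ → ℝ := fun p => 3 * (1 + k ^ 2) * (gs p ^ 2 + gt p ^ 2 + v p ^ 2) with hg
  have cg : ContinuousOn g D := continuousOn_const.mul (((cgs.pow 2).add (cgt.pow 2)).add (cv.pow 2))
  have g0 : ∀ p, 0 ≤ g p := fun p => by simp only [hg]; positivity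
  obtain ⟨L, hL⟩ := hDc.bddAbove_image cg
  set T := {p ∈ ballPlus (2 * r) | 0 < v p} with hT
  have hTo : IsOpen T :=
    (cv.mono (ballPlus_sub _)).isOpen_inter_preimage (ballPlus_open _) isOpen_Ioi
  have hTD : T ⊆ D := fun p hp => ballPlus_sub _ hp.1
  have nb : ∀ p ∈ ballPlus (2 * r), D ∈ nhds p := fun p hp =>
    mem_of_superset ((ballPlus_open _).mem_nhds hp) (ballPlus_sub _)
  have grad : ∀ p ∈ ballPlus (2 * r), gradSq (fun q => max (v q) 0) p + max (v p) 0 ^ 2 =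
      T.indicator (fun p => gs p ^ 2 + gt p ^ 2 + v p ^ 2) p := by
    intro p hp
    by_cases hvp : 0 < v p
    · rw [Set.indicator_of_mem (show p ∈ T from ⟨hp, hvp⟩), max_eq_left hvp.le]
      have hfd : HasFDerivAt v (fderivWithin ℝ v D p) p :=
        (hdiff p (ballPlus_sub _ hp)).hasFDerivWithinAt.hasFDerivAt (nb p hp)
      have t1 : Tendsto (fun s : ℝ => (s, p.2)) (nhds p.1) (nhds p) :=
        (by fun_prop : Continuous fun s : ℝ => (s, p.2)).tendsto' _ _ rfl
      have t2 : Tendsto (fun t : ℝ => (p.1, t)) (nhds p.2) (nhds p) :=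
        (by fun_prop : Continuous fun t : ℝ => (p.1, t)).tendsto' _ _ rfl
      have ev : ∀ᶠ q in nhds p, max (v q) 0 = v q := by
        filter_upwards [hfd.continuousAt.eventually (lt_mem_nhds hvp)] with q hq
        exact max_eq_left hq.le
      have d1 : deriv (fun s => max (v (s, p.2)) 0) p.1 = gs p := by
        have e1 : (fun s => max (v (s, p.2)) 0) =ᶠ[nhds p.1] fun s => v (s, p.2) := t1.eventually ev
        rw [e1.deriv_eq]
        have hc : HasDerivAt (fun s : ℝ => (s, p.2)) (1, 0) p.1 :=
          (hasDerivAt_id _).prodMk (hasDerivAt_const _ _)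
        exact (HasFDerivAt.comp_hasDerivAt (l := v) p.1 (by exact hfd) hc).deriv
      have d2 : deriv (fun t => max (v (p.1, t)) 0) p.2 = gt p := by
        have e1 : (fun t => max (v (p.1, t)) 0) =ᶠ[nhds p.2] fun t => v (p.1, t) := t2.eventually ev
        rw [e1.deriv_eq]
        have hc : HasDerivAt (fun t : ℝ => (p.1, t)) (0, 1) p.2 :=
          (hasDerivAt_const _ _).prodMk (hasDerivAt_id _)
        exact (HasFDerivAt.comp_hasDerivAt (l := v) p.2 (by exact hfd) hc).deriv
      unfold gradSq
      rw [d1, d2]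
    · rw [Set.indicator_of_notMem (fun h => hvp h.2)]
      push Not at hvp
      have d1 : deriv (fun s => max (v (s, p.2)) 0) p.1 = 0 := by
        apply IsLocalMin.deriv_eq_zero
        refine Eventually.of_forall fun s => ?_
        simp only [Prod.mk.eta, max_eq_right hvp]
        exact le_max_right _ _
      have d2 : deriv (fun t => max (v (p.1, t)) 0) p.2 = 0 := by
        apply IsLocalMin.deriv_eq_zero
        refine Eventually.of_forall fun s => ?_
        simp only [Prod.mk.eta, max_eq_right hvp]
        exact le_max_right _ _
      unfold gradSq
      rw [d1, d2, max_eq_right hvp]; simp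
  have hintg : ∫ p, T.indicator g p ≤ 3 * (1 + k ^ 2) * C₀ := by
    have e1 : T.indicator g = (ballPlus (2 * r)).indicator (fun p => 3 * (1 + k ^ 2) *
        (gradSq (fun q => max (v q) 0) p + max (v p) 0 ^ 2)) := by
      ext p
      by_cases hp : p ∈ ballPlus (2 * r)
      · rw [Set.indicator_of_mem hp, grad p hp]
        by_cases hpT : p ∈ T
        · rw [Set.indicator_of_mem hpT, Set.indicator_of_mem hpT]
        · rw [Set.indicator_of_notMem hpT, Set.indicator_of_notMem hpT]; simp
      · rw [Set.indicator_of_notMem hp, Set.indicator_of_notMem (fun h => hp h.1)]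
    rw [e1, integral_indicator (ballPlus_open _).measurableSet, integral_const_mul]
    exact mul_le_mul_of_nonneg_left hen (by positivity)
  refine ⟨fun p => dPhi (v p) * gs p, fun p => dPhi (v p) * gt p, T.indicator g, max L 0,
    ⟨?_, ?_, ?_, ?_, hintg⟩, ?_, ?_, ?_, ?_⟩
  · classical
    rw [← Set.piecewise_eq_indicator]
    exact ContinuousOn.measurable_piecewise (cg.mono hTD) continuousOn_const hTo.measurableSet
  · exact fun p => Set.indicator_nonneg (fun q _ => g0 q) p
  · intro p
    by_cases hpT : p ∈ T
    · rw [Set.indicator_of_mem hpT]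
      exact le_max_of_le_left (hL ⟨p, hTD hpT, rfl⟩)
    · rw [Set.indicator_of_notMem hpT]; exact le_max_right _ _
  · intro p hp
    have hpT : p ∈ T := by
      by_contra h
      exact hp (Set.indicator_of_notMem h _)
    exact ⟨(abs_fst_le_nrm p).trans (hTD hpT).1, (abs_snd_le_nrm p).trans (hTD hpT).1⟩
  · exact (dPhi_cont.comp_continuousOn cv).mul cgs
  · exact (dPhi_cont.comp_continuousOn cv).mul cgt
  · intro c e I x hx hc hm
    have h1 : HasFDerivWithinAt v (fderivWithin ℝ v D (c x)) D (c x) :=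
      (hdiff _ (hm hx)).hasFDerivWithinAt
    have h2 := h1.comp_hasDerivWithinAt x hc.hasDerivWithinAt hm
    have h3 := (Phi_hasDerivAt (v (c x))).comp_hasDerivWithinAt x h2
    refine HasDerivWithinAt.congr_deriv (f := fun t => Phi (v (c t))) h3 ?_
    have : fderivWithin ℝ v D (c x) e = e.1 * gs (c x) + e.2 * gt (c x) := by
      have he : e = e.1 • ((1:ℝ), (0:ℝ)) + e.2 • ((0:ℝ), (1:ℝ)) := by ext <;> simp
      conv_lhs => rw [he]
      rw [map_add, map_smul, map_smul]; rfl
    rw [this]; ring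
  · intro p hp
    by_cases hvp : 0 < v p
    · rw [Set.indicator_of_mem (show p ∈ T from ⟨hp, hvp⟩)]
      simp only [hg]
      have a1 := dPhi_sq_le (v p)
      have a2 : (dPhi (v p) * gs p) ^ 2 ≤ gs p ^ 2 := by
        rw [mul_pow]; nlinarith [sq_nonneg (gs p)]
      have a3 : (dPhi (v p) * gt p) ^ 2 ≤ gt p ^ 2 := by
        rw [mul_pow]; nlinarith [sq_nonneg (gt p)]
      have a4 : Phi (v p) ^ 2 ≤ v p ^ 2 := by
        have := Phi_le (v p)
        rw [max_eq_left hvp.le] at this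
        exact pow_le_pow_left₀ (Phi_nonneg _) this 2
      set X := dPhi (v p) * gs p
      set Y := dPhi (v p) * gt p
      set Z := Phi (v p)
      have b1 : (|X| + |Y| + k * Z) ^ 2 ≤ 3 * (|X| ^ 2 + |Y| ^ 2 + (k * Z) ^ 2) := by
        nlinarith [sq_nonneg (|X| - |Y|), sq_nonneg (|X| - k * Z), sq_nonneg (|Y| - k * Z)]
      rw [sq_abs, sq_abs, mul_pow] at b1
      have b2 : 0 ≤ k ^ 2 := sq_nonneg k
      have b3 : k ^ 2 * Z ^ 2 ≤ k ^ 2 * v p ^ 2 := mul_le_mul_of_nonneg_left a4 b2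
      have b4 : 0 ≤ k ^ 2 * (gs p ^ 2) := by positivity
      have b5 : 0 ≤ k ^ 2 * (gt p ^ 2) := by positivity
      have b6 : 0 ≤ v p ^ 2 := sq_nonneg _
      nlinarith
    · rw [Set.indicator_of_notMem (fun h => hvp h.2)]
      push Not at hvp
      have : Phi (v p) = 0 := le_antisymm ((Phi_le _).trans (by rw [max_eq_right hvp])) (Phi_nonneg _)
      simp [dPhi_of_nonpos hvp, this]

lemma energy_bound (r C₀ A : ℝ) (hr : 0 < r) (hA : A = 3 * (1 + (8 / r) ^ 2) * C₀) (hC₀ : 0 < C₀)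
    (v : ℝ × ℝ → ℝ) (hv : ContDiffOn ℝ 2 v (cballPlus (2 * r)))
    (hen : (∫ p in ballPlus (2 * r), (gradSq (fun q => max (v q) 0) p + max (v p) 0 ^ 2)) ≤ C₀)
    (s0 t0 lam : ℝ) (ht0 : 0 ≤ t0) (hx0 : nrm (s0, t0) ≤ r) (hl : 0 < lam) (hlr : lam ≤ r / 8) :
    ∃ a, lam / 2 ≤ a ∧ a ≤ lam ∧ ∀ y : ℝ × ℝ, |y.1 - s0| ≤ a → |y.2 - t0| ≤ a → 0 ≤ y.2 →
      (|y.1 - s0| = a ∨ (|y.2 - t0| = a ∧ 0 < y.2)) →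
      Phi (v y) ≤ 3 + 12 * A + (Real.log ((r / 4) / a) / 2 + A / 2) := by
  obtain ⟨Us, Ut, Q, L, hQ, cUs, cUt, hpath, hYQ⟩ := build r (8 / r) C₀ hr v hv hen
  rw [← hA] at hQ
  have hA0 : 0 ≤ A := by rw [hA]; positivity
  obtain ⟨a, ha1, ha2, q1, q2, q3, q4⟩ := hQ.good_radius s0 t0 lam hl
  have ha : 0 < a := by linarith
  refine ⟨a, ha1, ha2, ?_⟩
  have inD : ∀ h k : ℝ, |h| ≤ r / 4 → |k| ≤ r / 4 → nrm (s0 + h, t0 + k) < 2 * r := by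
    intro h k hh hk
    linarith [nrm_add_le s0 t0 h k]
  have inD' : ∀ s t : ℝ, |s - s0| ≤ r / 4 → |t - t0| ≤ r / 4 → nrm (s, t) < 2 * r := by
    intro s t hs ht
    have := inD (s - s0) (t - t0) hs ht
    simpa using this
  have sqs : ∀ p ∈ ballPlus (2 * r), Us p ^ 2 ≤ Q p ∧ Ut p ^ 2 ≤ Q p := by
    intro p hp
    have h1 := hYQ p hp
    have h2 : 0 ≤ 8 / r * Phi (v p) := mul_nonneg (by positivity) (Phi_nonneg _)
    constructor
    · refine le_trans ?_ h1
      rw [← sq_abs]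
      exact pow_le_pow_left₀ (abs_nonneg _) (by linarith [abs_nonneg (Ut p)]) 2
    · refine le_trans ?_ h1
      rw [← sq_abs]
      exact pow_le_pow_left₀ (abs_nonneg _) (by linarith [abs_nonneg (Us p)]) 2
  -- vertical sides
  have vert : ∀ σ, |σ - s0| ≤ a → lam * (∫ t, Q (σ, t)) ≤ 8 * A → ∀ t t', |t - t0| ≤ a → 0 ≤ t →
      |t' - t0| ≤ a → 0 ≤ t' → Phi (v (σ, t)) - Phi (v (σ, t')) ≤ 1 + 4 * A := by
    intro σ hσ hq t t' h1 h2 h3 h4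
    have hm : Set.MapsTo (fun t : ℝ => (σ, t)) (Set.Icc (max 0 (t0 - a)) (t0 + a))
        (cballPlus (2 * r)) := by
      intro z hz
      have z1 := (le_max_left _ _).trans hz.1
      have z2 := (le_max_right _ _).trans hz.1
      refine ⟨(inD' σ z (by linarith) ?_).le, z1⟩
      rw [abs_le]; constructor <;> linarith [hz.2]
    have := osc_le (f := fun t => Phi (v (σ, t))) (f' := fun t => Ut (σ, t)) (q := fun t => Q (σ, t))
      (a := max 0 (t0 - a)) (b := t0 + a) hl
      (by linarith [le_max_right 0 (t0 - a)])
      (fun x hx => by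
        have := hpath (fun t : ℝ => (σ, t)) (0, 1) _ x hx
          ((hasDerivAt_const _ _).prodMk (hasDerivAt_id _)) hm
        simpa using this)
      (cUt.comp (by fun_prop) hm) (hQ.int1 σ) (fun x => hQ.nonneg _)
      (fun x hx => by
        have hx' := hm ⟨hx.1.le, hx.2.le⟩
        have z2 := (le_max_right _ _).trans hx.1.le
        refine (sqs (σ, x) ⟨inD' σ x (by linarith) ?_, (le_max_left _ _).trans_lt hx.1⟩).2
        rw [abs_le]; constructor <;> linarith [hx.2])
      t t'
      ⟨max_le h2 (by linarith [(abs_le.1 h1).1]), by linarith [(abs_le.1 h1).2]⟩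
      ⟨max_le h4 (by linarith [(abs_le.1 h3).1]), by linarith [(abs_le.1 h3).2]⟩
    linarith
  have horiz : ∀ θ, |θ - t0| ≤ a → 0 < θ → lam * (∫ s, Q (s, θ)) ≤ 8 * A → ∀ s s', |s - s0| ≤ a →
      |s' - s0| ≤ a → Phi (v (s, θ)) - Phi (v (s', θ)) ≤ 1 + 4 * A := by
    intro θ hθ hθ0 hq s s' h1 h2
    have hin : ∀ z ∈ Set.Icc (s0 - a) (s0 + a), nrm (z, θ) < 2 * r := by
      intro z hz
      refine inD' z θ ?_ (by linarith)
      rw [abs_le]; constructor <;> linarith [hz.1, hz.2]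
    have hm : Set.MapsTo (fun s : ℝ => (s, θ)) (Set.Icc (s0 - a) (s0 + a))
        (cballPlus (2 * r)) := fun z hz => ⟨(hin z hz).le, hθ0.le⟩
    have := osc_le (f := fun s => Phi (v (s, θ))) (f' := fun s => Us (s, θ)) (q := fun s => Q (s, θ))
      (a := s0 - a) (b := s0 + a) hl
      (by linarith)
      (fun x hx => by
        have := hpath (fun s : ℝ => (s, θ)) (1, 0) _ x hx
          ((hasDerivAt_id _).prodMk (hasDerivAt_const _ _)) hm
        simpa using this)
      (cUs.comp (by fun_prop) hm) (hQ.int2 θ) (fun x => hQ.nonneg _)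
      (fun x hx => (sqs (x, θ) ⟨hin x ⟨hx.1.le, hx.2.le⟩, hθ0⟩).1)
      s s'
      ⟨by linarith [(abs_le.1 h1).1], by linarith [(abs_le.1 h1).2]⟩
      ⟨by linarith [(abs_le.1 h2).1], by linarith [(abs_le.1 h2).2]⟩
    linarith
  intro y hy1 hy2 hy0 hside
  have absa : |s0 + a - s0| ≤ a := by rw [add_sub_cancel_left, abs_of_pos ha]
  have absa' : |s0 - a - s0| ≤ a := by rw [sub_sub_cancel_left, abs_neg, abs_of_pos ha]
  have abst : |t0 + a - t0| ≤ a := by rw [add_sub_cancel_left, abs_of_pos ha]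
  have hta : 0 < t0 + a := by linarith
  have side : ∀ τ ∈ Set.Ioc (0:ℝ) 1,
      Phi (v y) - (3 + 12 * A) ≤ Phi (v (s0 + a, t0 + a * τ)) := by
    intro τ hτ
    have n0 : 0 ≤ a * τ := mul_nonneg ha.le hτ.1.le
    have n1 : a * τ ≤ a := by nlinarith [hτ.2]
    have z1 : |t0 + a * τ - t0| ≤ a := by rw [add_sub_cancel_left, abs_of_nonneg n0]; exact n1
    have z2 : 0 ≤ t0 + a * τ := by linarith
    obtain ⟨y1, y2⟩ := y
    simp only at hy1 hy2 hy0 hside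
    have hR := vert (s0 + a) absa q1
    rcases hside with h | ⟨h, h0⟩
    · rcases (abs_eq ha.le).1 h with h | h
      · have e : y1 = s0 + a := by linarith
        subst e
        linarith [hR y2 _ hy2 hy0 z1 z2]
      · have e : y1 = s0 - a := by linarith
        subst e
        linarith [vert (s0 - a) absa' q2 y2 (t0 + a) hy2 hy0 abst hta.le,
          horiz (t0 + a) abst hta q3 (s0 - a) (s0 + a) absa' absa,
          hR (t0 + a) _ abst hta.le z1 z2]
    · rcases (abs_eq ha.le).1 h with h | h
      · have e : y2 = t0 + a := by linarith
        subst e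
        linarith [horiz (t0 + a) abst hta q3 y1 (s0 + a) hy1 absa,
          hR (t0 + a) _ abst hta.le z1 z2]
      · have e : y2 = t0 - a := by linarith
        subst e
        linarith [horiz (t0 - a) hy2 h0 q4 y1 (s0 + a) hy1 absa,
          hR (t0 - a) _ hy2 hy0 z1 z2]
  have haR : a ≤ r / 4 := by linarith
  suffices Phi (v y) - (3 + 12 * A) ≤ Real.log ((r / 4) / a) / 2 + A / 2 by linarith
  refine hQ.cone s0 t0 a (r / 4) _ ha haR fun τ hτ => (side τ hτ).trans ?_
  set R := r / 4 with hR
  have hRa : 0 < R - a := by linarith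
  set c : ℝ → ℝ × ℝ := fun α => (s0 + α, t0 + α * τ) with hc
  have hcd : ∀ α, HasDerivAt c (1, τ) α := by
    intro α
    refine HasDerivAt.prodMk ((hasDerivAt_id α).const_add s0) ?_
    simpa using ((hasDerivAt_id α).mul_const τ).const_add t0
  have hnr : ∀ α ∈ Set.Icc a R, nrm (c α) < 2 * r ∧ 0 < (c α).2 := by
    intro α hα
    have hα0 : 0 < α := ha.trans_le hα.1
    have n0 : 0 < α * τ := mul_pos hα0 hτ.1
    have n1 : α * τ ≤ α := by nlinarith [hτ.2]
    refine ⟨inD _ _ ?_ ?_, ?_⟩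
    · rw [abs_of_pos hα0]; exact hα.2
    · rw [abs_of_pos n0]; linarith [hα.2]
    · simp only [hc]; linarith
  have hm : Set.MapsTo c (Set.Icc a R) (cballPlus (2 * r)) :=
    fun α hα => ballPlus_sub _ (hnr α hα)
  have cc : Continuous c := by rw [hc]; fun_prop
  set f' : ℝ → ℝ := fun α => 1 * Us (c α) + τ * Ut (c α) with hf'
  have hfd : ∀ α ∈ Set.Icc a R, HasDerivWithinAt (fun α => Phi (v (c α))) (f' α) (Set.Icc a R) α :=
    fun α hα => hpath c (1, τ) _ α hα (hcd α) hm
  have cf' : ContinuousOn f' (Set.Icc a R) :=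
    (continuousOn_const.mul (cUs.comp cc.continuousOn hm)).add
      (continuousOn_const.mul (cUt.comp cc.continuousOn hm))
  have cf : ContinuousOn (fun α => Phi (v (c α))) (Set.Icc a R) :=
    fun α hα => (hfd α hα).continuousWithinAt
  have hgd : ∀ α ∈ Set.Icc a R, HasDerivWithinAt
      (fun α => (α - R) / (R - a) * Phi (v (c α)))
      (1 / (R - a) * Phi (v (c α)) + (α - R) / (R - a) * f' α) (Set.Icc a R) α := by
    intro α hα
    exact ((((hasDerivAt_id α).sub_const R).div_const (R - a)).hasDerivWithinAt).mul (hfd α hα)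
  have hintg : IntervalIntegrable (fun α => 1 / (2 * α) + α / 2 * Q (c α)) volume a R := by
    refine IntervalIntegrable.add ?_ ?_
    · refine ContinuousOn.intervalIntegrable ?_
      rw [Set.uIcc_of_le haR]
      refine continuousOn_const.div (by fun_prop) fun x hx => ?_
      have := ha.trans_le hx.1; positivity
    · rw [intervalIntegrable_iff, Set.uIoc_of_le haR]
      refine Measure.integrableOn_of_bounded (M := R / 2 * L) (by simp)
        ((measurable_id.div_const 2).mul (hQ.meas.comp cc.measurable)).aestronglyMeasurable ?_
      filter_upwards [ae_restrict_mem measurableSet_Ioc] with α hα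
      have : 0 ≤ α / 2 := by linarith [hα.1]
      rw [Real.norm_eq_abs, abs_of_nonneg (mul_nonneg this (hQ.nonneg _))]
      exact mul_le_mul (by linarith [hα.2]) (hQ.bdd _) (hQ.nonneg _) (by linarith)
  have key := ftc_le haR hgd (by
    refine (continuousOn_const.mul cf).add (ContinuousOn.mul ?_ cf')
    fun_prop) hintg (fun α hα => by
      have hα0 : 0 < α := ha.trans hα.1
      refine le_trans ?_ (young hα0 (hYQ (c α) (hnr α ⟨hα.1.le, hα.2.le⟩)))
      have e1 : 1 / (R - a) ≤ 8 / r := by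
        rw [div_le_div_iff₀ hRa hr]; linarith
      have e2 := mul_le_mul_of_nonneg_right e1 (Phi_nonneg (v (c α)))
      have e3 : (α - R) / (R - a) * f' α ≤ |f' α| := by
        refine (le_abs_self _).trans ?_
        rw [abs_mul]
        have : |(α - R) / (R - a)| ≤ 1 := by
          rw [abs_div, abs_of_pos hRa, div_le_one hRa, abs_of_nonpos (by linarith [hα.2])]
          linarith [hα.1]
        exact mul_le_of_le_one_left (abs_nonneg _) this
      have e4 : |f' α| ≤ |Us (c α)| + |Ut (c α)| := by
        refine (abs_add_le _ _).trans ?_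
        rw [one_mul, abs_mul, abs_of_pos hτ.1]
        nlinarith [hτ.2, abs_nonneg (Ut (c α))]
      linarith)
  have e5 : (a - R) / (R - a) = -1 := by
    rw [div_eq_iff hRa.ne']; ring
  rw [sub_self, zero_div, zero_mul, e5] at key
  have : Phi (v (c a)) ≤ ∫ α in a..R, (1 / (2 * α) + α / 2 * Q (c α)) := by linarith
  exact this

lemma main_bound (r C₀ A : ℝ) (hr : 0 < r) (hA : A = 3 * (1 + (8 / r) ^ 2) * C₀) (hC₀ : 0 < C₀)
    (F : ℝ × ℝ → ℝ) (H : ℝ → ℝ) (v : ℝ × ℝ → ℝ)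
    (hF : ∀ p ∈ cballPlus (2 * r), |F p| ≤ C₀)
    (hH : ∀ s ∈ Set.Icc (-(2 * r)) (2 * r), |H s| ≤ C₀)
    (hv : ContDiffOn ℝ 2 v (cballPlus (2 * r)))
    (hpde : ∀ p ∈ ballPlus (2 * r), -lap v p = F p * Real.exp (2 * v p))
    (hbd : ∀ s : ℝ, |s| < 2 * r →
        -derivWithin (fun t => v (s, t)) (Set.Ici 0) 0 = H s * Real.exp (v (s, 0)))
    (hen : (∫ p in ballPlus (2 * r), (gradSq (fun q => max (v q) 0) p + max (v p) 0 ^ 2)) ≤ C₀)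
    (p : ℝ × ℝ) (hp : p ∈ ballPlus (r / 2)) :
    v p ≤ max (Real.log (2 / r)) (C₀ + 8 + 25 * A + Real.log (4 * r) + Real.log 2) := by
  have hsub : cballPlus r ⊆ cballPlus (2 * r) := fun q hq => ⟨by linarith [hq.1], hq.2⟩
  have cv : ContinuousOn v (cballPlus (2 * r)) := hv.continuousOn
  have cpsi : ContinuousOn (fun q => Real.exp (v q) * (r - nrm q)) (cballPlus r) :=
    (Real.continuous_exp.comp_continuousOn (cv.mono hsub)).mul
      (continuous_const.sub nrm_cont).continuousOn
  have hpr : p ∈ cballPlus r := ⟨by linarith [hp.1], hp.2.le⟩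
  obtain ⟨⟨s0, t0⟩, hx0, hmax⟩ := (cballPlus_compact r).exists_isMaxOn ⟨p, hpr⟩ cpsi
  have hmax : ∀ q ∈ cballPlus r, Real.exp (v q) * (r - nrm q) ≤
      Real.exp (v (s0, t0)) * (r - nrm (s0, t0)) := hmax
  set E := Real.exp (v (s0, t0)) with hE
  have hE0 : 0 < E := Real.exp_pos _
  set d := r - nrm (s0, t0) with hd
  have hpd : Real.exp (v p) * (r / 2) ≤ E * d :=
    le_trans (mul_le_mul_of_nonneg_left (by linarith [hp.1]) (Real.exp_pos _).le) (hmax p hpr)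
  have hdr : d ≤ r := by
    have : 0 ≤ nrm (s0, t0) := Real.sqrt_nonneg _
    linarith
  rcases le_total (E * d) 1 with hM | hM
  · refine le_max_of_le_left ?_
    rw [Real.le_log_iff_exp_le (by positivity), le_div_iff₀ hr]
    linarith
  refine le_max_of_le_right ?_
  have hd0 : 0 < d := by
    by_contra h
    push Not at h
    nlinarith
  have ht0 : 0 ≤ t0 := hx0.2
  set lam := 1 / (8 * E) with hlam
  have hl0 : 0 < lam := by positivity
  have hld : lam ≤ d / 8 := by
    rw [hlam, div_le_div_iff₀ (by positivity) (by norm_num)]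
    nlinarith
  obtain ⟨a, ha1, ha2, hside⟩ := energy_bound r C₀ A hr hA hC₀ v hv hen s0 t0 lam ht0 hx0.1 hl0
    (by linarith)
  have ha : 0 < a := by linarith
  -- geometry of the square
  have geo : ∀ q : ℝ × ℝ, |q.1 - s0| ≤ a → |q.2 - t0| ≤ a → 0 ≤ q.2 →
      nrm q < 2 * r ∧ Real.exp (v q) ≤ 2 * E := by
    intro q h1 h2 h3
    have h4 : nrm q ≤ nrm (s0, t0) + |q.1 - s0| + |q.2 - t0| := by
      have := nrm_add_le s0 t0 (q.1 - s0) (q.2 - t0)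
      simpa using this
    have h5 : d / 2 ≤ r - nrm q := by linarith
    refine ⟨by linarith, ?_⟩
    have h6 := hmax q ⟨by linarith, h3⟩
    have h7 := mul_le_mul_of_nonneg_left h5 (Real.exp_pos (v q)).le
    have h8 : Real.exp (v q) * d ≤ (2 * E) * d := by linarith
    exact le_of_mul_le_mul_right h8 hd0
  have haE : a * (8 * E) ≤ 1 := by
    have := mul_le_mul_of_nonneg_right ha2 (by positivity : 0 ≤ 8 * E)
    rwa [hlam, one_div_mul_cancel (by positivity)] at this
  obtain ⟨y, hy1, hy2, hy0, hys, hyv⟩ := max_principle v s0 t0 a E C₀ ha ht0 hE0 hC₀ haE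
    (cv.mono fun q hq => ⟨(geo q hq.1 hq.2.1 hq.2.2).1.le, hq.2.2⟩)
    (fun q h1 h2 h3 => (hv q ⟨(geo q h1.le h2.le h3.le).1.le, h3.le⟩).contDiffAt
      (mem_of_superset ((ballPlus_open _).mem_nhds ⟨(geo q h1.le h2.le h3.le).1, h3⟩)
        (ballPlus_sub _)))
    (fun q h1 h2 h3 => by
      have hq : q ∈ ballPlus (2 * r) := ⟨(geo q h1.le h2.le h3.le).1, h3⟩
      have e1 := hpde q hq
      have e2 := hF q (ballPlus_sub _ hq)
      have e3 := (geo q h1.le h2.le h3.le).2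
      have e4 : Real.exp (2 * v q) ≤ 4 * E ^ 2 := by
        rw [two_mul, Real.exp_add]
        nlinarith [Real.exp_pos (v q)]
      have e5 : F q * Real.exp (2 * v q) ≤ C₀ * (4 * E ^ 2) :=
        mul_le_mul ((le_abs_self _).trans e2) e4 (Real.exp_pos _).le hC₀.le
      linarith)
    (fun s h1 h2 => by
      have hg := geo (s, 0) h1.le (by simpa [abs_of_nonneg ht0] using h2) le_rfl
      have hs : |s| < 2 * r := (abs_fst_le_nrm (s, 0)).trans_lt hg.1
      refine ⟨derivWithin (fun t => v (s, t)) (Set.Ici 0) 0, ?_, ?_⟩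
      · refine DifferentiableWithinAt.hasDerivWithinAt ?_
        have hdw : DifferentiableWithinAt ℝ v (cballPlus (2 * r)) (s, 0) :=
          hv.differentiableOn (by norm_num) _ ⟨hg.1.le, le_rfl⟩
        have hpre : (fun t : ℝ => (s, t)) ⁻¹' (cballPlus (2 * r)) ∈ nhdsWithin 0 (Set.Ici (0:ℝ)) := by
          have hcn : Continuous fun t : ℝ => nrm (s, t) := nrm_cont.comp (by fun_prop)
          filter_upwards [nhdsWithin_le_nhds (hcn.continuousAt.eventually (gt_mem_nhds hg.1)),
            self_mem_nhdsWithin] with t ht1 ht2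
          exact ⟨ht1.le, ht2⟩
        have hcomp : DifferentiableWithinAt ℝ (fun t => v (s, t))
            ((fun t : ℝ => (s, t)) ⁻¹' (cballPlus (2 * r))) 0 :=
          DifferentiableWithinAt.comp (g := v) (0:ℝ) hdw (by fun_prop) (Set.mapsTo_preimage _ _)
        exact hcomp.mono_of_mem_nhdsWithin hpre
      · have e1 := hbd s hs
        have e2 := hH s (abs_le.1 hs.le)
        have e3 : H s * Real.exp (v (s, 0)) ≤ C₀ * (2 * E) :=
          mul_le_mul ((le_abs_self _).trans e2) hg.2 (Real.exp_pos _).le hC₀.le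
        linarith)
  have hPy := hside y hy1 hy2 hy0 hys
  have hPy2 := le_Phi (v y)
  have hlog : Real.log ((r / 4) / a) ≤ Real.log (4 * r) + v (s0, t0) := by
    have : Real.log (4 * r) + v (s0, t0) = Real.log (4 * r * E) := by
      rw [Real.log_mul (by positivity) hE0.ne', hE, Real.log_exp]
    rw [this]
    refine Real.log_le_log (by positivity) ?_
    rw [div_le_iff₀ ha]
    have : 1 / (16 * E) ≤ a := by
      have : 1 / (16 * E) = lam / 2 := by rw [hlam]; field_simp; norm_num
      linarith
    have := mul_le_mul_of_nonneg_left this (by positivity : 0 ≤ 4 * r * E)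
    calc r / 4 = 4 * r * E * (1 / (16 * E)) := by field_simp; norm_num
      _ ≤ _ := this
  have hfin : v (s0, t0) ≤ C₀ + 8 + 25 * A + Real.log (4 * r) := by linarith
  have h9 : Real.exp (v p) ≤ 2 * E := by
    have : E * d ≤ E * r := mul_le_mul_of_nonneg_left hdr hE0.le
    have : Real.exp (v p) * r ≤ (2 * E) * r := by linarith
    exact le_of_mul_le_mul_right this hr
  have h10 : v p ≤ Real.log (2 * E) := (Real.le_log_iff_exp_le (by positivity)).2 h9
  rw [Real.log_mul (by norm_num) hE0.ne', hE, Real.log_exp] at h10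
  linarith

/-- **Uniform upper bound from a uniform Sobolev bound on the positive parts**
(cf. Lemma 4.2(c)): if `−Δv_n = F_n e^{2v_n}` in `B_{2r}⁺`, `∂v_n/∂ν = H_n e^{v_n}` on
`Γ_{2r}`, with `|F_n| ≤ C₀`, `|H_n| ≤ C₀` and `∫_{B_{2r}⁺}(|∇v_n⁺|² + (v_n⁺)²) ≤ C₀`
uniformly in `n`, then `v_n ≤ C(r, C₀)` on `B_{r/2}⁺` for all `n`. -/
theorem uniform_upper_bound (r C₀ : ℝ) (hr : 0 < r) (hC₀ : 0 < C₀) :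
    ∃ C : ℝ, ∀ (F : ℕ → ℝ × ℝ → ℝ) (H : ℕ → ℝ → ℝ) (v : ℕ → ℝ × ℝ → ℝ),
      (∀ n, ContinuousOn (F n) (cballPlus (2 * r))) →
      (∀ n, ContinuousOn (H n) (Set.Icc (-(2 * r)) (2 * r))) →
      (∀ n, ∀ p ∈ cballPlus (2 * r), |F n p| ≤ C₀) →
      (∀ n, ∀ s ∈ Set.Icc (-(2 * r)) (2 * r), |H n s| ≤ C₀) →
      (∀ n, ContDiffOn ℝ 2 (v n) (cballPlus (2 * r))) →
      (∀ n, ∀ p ∈ ballPlus (2 * r), -lap (v n) p = F n p * Real.exp (2 * v n p)) →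
      (∀ n, ∀ s : ℝ, |s| < 2 * r →
        -derivWithin (fun t => v n (s, t)) (Set.Ici 0) 0 = H n s * Real.exp (v n (s, 0))) →
      (∀ n, (∫ p in ballPlus (2 * r),
        (gradSq (fun q => max (v n q) 0) p + max (v n p) 0 ^ 2)) ≤ C₀) →
      ∀ n, ∀ p ∈ ballPlus (r / 2), v n p ≤ C := by
  exact ⟨_, fun F H v _ _ hF hH hv hpde hbd hen n p hp =>
    main_bound r C₀ _ hr rfl hC₀ (F n) (H n) (v n) (hF n) (hH n) (hv n) (hpde n) (hbd n) (hen n)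
      p hp⟩
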